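/- arXiv:1910.12666 — 2 statements merged into one kernel-verified Lean document; each statement's English description precedes it below -/
import Mathlib

section
/- Let ρ = Σᵢ qᵢ ρᵢ be a convex combination of three-qubit density matrices ρᵢ with qᵢ > 0 and Σᵢ qᵢ = 1, let X₀, X₁, Y₀, Y₁ be Hermitian qubit observables with eigenvalues ±1, and Z₀ = σx, Z₁ = σy. Suppose the four conditioning events in CP have positive probability for ρ and CP(ρ) = 4. Then for every i, the unnormalized conditional states of the component ρᵢ satisfy σ^{C,(i)}_{1,1|X₀,Y₀} = Tr[σ^{C,(i)}_{1,1|X₀,Y₀}]·(I+σx)/2, σ^{C,(i)}_{0,1|X₁,Y₁} = Tr[σ^{C,(i)}_{0,1|X₁,Y₁}]·(I+σx)/2, σ^{C,(i)}_{0,1|X₀,Y₁} = Tr[σ^{C,(i)}_{0,1|X₀,Y₁}]·(I+σy)/2, and σ^{C,(i)}_{0,1|X₁,Y₀} = Tr[σ^{C,(i)}_{0,1|X₁,Y₀}]·(I+σy)/2; in particular, every component ρᵢ for which the four conditioning events have positive probability also attains CP(ρᵢ) = 4 with the same measurement settings. -/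
open Matrix Complex
open scoped Matrix Kronecker ComplexOrder

noncomputable section
namespace Paper

/-- Pauli X. -/
def sx : Matrix (Fin 2) (Fin 2) ℂ := !![0, 1; 1, 0]
/-- Pauli Y. -/
def sy : Matrix (Fin 2) (Fin 2) ℂ := !![0, -Complex.I; Complex.I, 0]
/-- Pauli Z. -/
def sz : Matrix (Fin 2) (Fin 2) ℂ := !![1, 0; 0, -1]

/-- Projector onto outcome `a ∈ {0,1}` of a dichotomic observable `O`:
`Π₀ = (I+O)/2`, `Π₁ = (I−O)/2`. -/
def Proj {d : ℕ} (a : Fin 2) (O : Matrix (Fin d) (Fin d) ℂ) : Matrix (Fin d) (Fin d) ℂ :=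
  (2 : ℂ)⁻¹ • (1 + if a = 0 then O else -O)

/-- Outer product `|ψ⟩⟨ψ|`. -/
def outer {n : Type*} (ψ : n → ℂ) : Matrix n n ℂ :=
  Matrix.of fun i j => ψ i * star (ψ j)

/-- `ψ` is a unit vector. -/
def UnitVec {n : Type*} [Fintype n] (ψ : n → ℂ) : Prop := ∑ i, star (ψ i) * ψ i = 1

/-- Hermitian observable with eigenvalues `±1`. -/
def Dichotomic {d : ℕ} (O : Matrix (Fin d) (Fin d) ℂ) : Prop := O.IsHermitian ∧ O * O = 1

/-- Partial trace over the first two tensor factors. -/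
def trAB {dA dB : ℕ} (M : Matrix (Fin dA × Fin dB × Fin 2) (Fin dA × Fin dB × Fin 2) ℂ) :
    Matrix (Fin 2) (Fin 2) ℂ :=
  Matrix.of fun i j => ∑ k : Fin dA, ∑ l : Fin dB, M (k, l, i) (k, l, j)

/-- Unnormalized conditional state on Charlie's qubit:
`σ^C_{a,b|X,Y} = Tr_{AB}[(Π_{a|X} ⊗ Π_{b|Y} ⊗ I₂) ρ]`. -/
def condState {dA dB : ℕ} (ρ : Matrix (Fin dA × Fin dB × Fin 2) (Fin dA × Fin dB × Fin 2) ℂ)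
    (X : Matrix (Fin dA) (Fin dA) ℂ) (Y : Matrix (Fin dB) (Fin dB) ℂ) (a b : Fin 2) :
    Matrix (Fin 2) (Fin 2) ℂ :=
  trAB ((Proj a X ⊗ₖ (Proj b Y ⊗ₖ (1 : Matrix (Fin 2) (Fin 2) ℂ))) * ρ)

/-- Conditional probability `P(c_Z | ·) = Tr[Π_{c|Z} σ] / Tr[σ]`. -/
def condProb (Z σ : Matrix (Fin 2) (Fin 2) ℂ) (c : Fin 2) : ℝ :=
  ((Proj c Z * σ).trace).re / (σ.trace).re

/-- The fine-grained steering expression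
`CP = P(0_{Z₀}|1_{X₀}1_{Y₀}) + P(0_{Z₀}|0_{X₁}1_{Y₁}) + P(0_{Z₁}|0_{X₀}1_{Y₁}) + P(0_{Z₁}|0_{X₁}1_{Y₀})`
with `Z₀ = σx`, `Z₁ = σy`. -/
def CP {dA dB : ℕ} (ρ : Matrix (Fin dA × Fin dB × Fin 2) (Fin dA × Fin dB × Fin 2) ℂ)
    (X0 X1 : Matrix (Fin dA) (Fin dA) ℂ) (Y0 Y1 : Matrix (Fin dB) (Fin dB) ℂ) : ℝ :=
  condProb sx (condState ρ X0 Y0 1 1) 0 + condProb sx (condState ρ X1 Y1 0 1) 0 +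
  condProb sy (condState ρ X0 Y1 0 1) 0 + condProb sy (condState ρ X1 Y0 0 1) 0

/-- The four conditioning events in `CP` have positive probability. -/
def PosEvents {dA dB : ℕ} (ρ : Matrix (Fin dA × Fin dB × Fin 2) (Fin dA × Fin dB × Fin 2) ℂ)
    (X0 X1 : Matrix (Fin dA) (Fin dA) ℂ) (Y0 Y1 : Matrix (Fin dB) (Fin dB) ℂ) : Prop :=
  0 < ((condState ρ X0 Y0 1 1).trace).re ∧ 0 < ((condState ρ X1 Y1 0 1).trace).re ∧
  0 < ((condState ρ X0 Y1 0 1).trace).re ∧ 0 < ((condState ρ X1 Y0 0 1).trace).re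

/-- Product across the bipartition `A|BC`. -/
def BisepA {dA dB : ℕ} (ψ : Fin dA × Fin dB × Fin 2 → ℂ) : Prop :=
  ∃ (u : Fin dA → ℂ) (v : Fin dB × Fin 2 → ℂ), ∀ i j k, ψ (i, j, k) = u i * v (j, k)

/-- Product across the bipartition `B|AC`. -/
def BisepB {dA dB : ℕ} (ψ : Fin dA × Fin dB × Fin 2 → ℂ) : Prop :=
  ∃ (u : Fin dB → ℂ) (v : Fin dA × Fin 2 → ℂ), ∀ i j k, ψ (i, j, k) = u j * v (i, k)

/-- Product across the bipartition `C|AB`. -/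
def BisepC {dA dB : ℕ} (ψ : Fin dA × Fin dB × Fin 2 → ℂ) : Prop :=
  ∃ (u : Fin 2 → ℂ) (v : Fin dA × Fin dB → ℂ), ∀ i j k, ψ (i, j, k) = v (i, j) * u k

/-- Genuine multipartite entanglement: not a product across any bipartition. -/
def GenEnt {dA dB : ℕ} (ψ : Fin dA × Fin dB × Fin 2 → ℂ) : Prop :=
  ¬ BisepA ψ ∧ ¬ BisepB ψ ∧ ¬ BisepC ψ


lemma proj_herm {O : Matrix (Fin 2) (Fin 2) ℂ} (h : Dichotomic O) (a : Fin 2) :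
    (Proj a O)ᴴ = Proj a O := by
  have h1 : Oᴴ = O := h.1
  fin_cases a <;> simp [Proj, Matrix.conjTranspose_smul, h1]

lemma proj_idem {O : Matrix (Fin 2) (Fin 2) ℂ} (h : Dichotomic O) (a : Fin 2) :
    Proj a O * Proj a O = Proj a O := by
  have h2 := h.2
  fin_cases a
  · simp only [Proj, Fin.zero_eta, if_true, smul_mul_smul_comm, mul_add, add_mul, one_mul, mul_one,
      h2]
    module
  · simp only [Proj, Fin.mk_one, one_ne_zero, if_false, smul_mul_smul_comm, mul_add, add_mul,
      one_mul, mul_one, neg_mul, mul_neg, neg_neg, h2]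
    module

/-- Kraus-type operator. -/
def Kr (A B : Matrix (Fin 2) (Fin 2) ℂ) (k l : Fin 2) :
    Matrix (Fin 2 × Fin 2 × Fin 2) (Fin 2) ℂ :=
  Matrix.of fun p i => A p.1 k * B p.2.1 l * (1 : Matrix (Fin 2) (Fin 2) ℂ) p.2.2 i

lemma trAB_kraus (ρ : Matrix (Fin 2 × Fin 2 × Fin 2) (Fin 2 × Fin 2 × Fin 2) ℂ)
    (A B : Matrix (Fin 2) (Fin 2) ℂ) :
    trAB (((A * Aᴴ) ⊗ₖ ((B * Bᴴ) ⊗ₖ (1 : Matrix (Fin 2) (Fin 2) ℂ))) * ρ) =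
      ∑ k, ∑ l, (Kr A B k l)ᴴ * ρ * Kr A B k l := by
  ext i j
  fin_cases i <;> fin_cases j <;>
  · simp [trAB, Kr, Matrix.mul_apply, Fintype.sum_prod_type, Fin.sum_univ_two, Matrix.one_apply]
    ring

lemma condState_psd {ρ : Matrix (Fin 2 × Fin 2 × Fin 2) (Fin 2 × Fin 2 × Fin 2) ℂ}
    (hρ : ρ.PosSemidef) {X Y : Matrix (Fin 2) (Fin 2) ℂ} (hX : Dichotomic X) (hY : Dichotomic Y)
    (a b : Fin 2) : (condState ρ X Y a b).PosSemidef := by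
  have h := trAB_kraus ρ (Proj a X) (Proj b Y)
  rw [proj_herm hX, proj_herm hY, proj_idem hX, proj_idem hY] at h
  rw [condState, h]
  refine Matrix.posSemidef_sum _ fun k _ => Matrix.posSemidef_sum _ fun l _ => ?_
  exact hρ.conjTranspose_mul_mul_same _

lemma condState_sum {m : ℕ} (q : Fin m → ℝ)
    (ρi : Fin m → Matrix (Fin 2 × Fin 2 × Fin 2) (Fin 2 × Fin 2 × Fin 2) ℂ)
    (X Y : Matrix (Fin 2) (Fin 2) ℂ) (a b : Fin 2) :
    condState (∑ i, (q i : ℂ) • ρi i) X Y a b = ∑ i, (q i : ℂ) • condState (ρi i) X Y a b := by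
  ext i j
  simp only [condState, trAB, Matrix.mul_sum, Matrix.mul_smul, Matrix.of_apply, Matrix.sum_apply,
    Matrix.smul_apply, smul_eq_mul, Fin.sum_univ_two, mul_add, Finset.sum_add_distrib]

/-- The facts about an observable that the argument uses. -/
def Good (Z : Matrix (Fin 2) (Fin 2) ℂ) : Prop :=
  (Proj 0 Z * Proj 0 Z).trace = 1 ∧
  ∀ σ : Matrix (Fin 2) (Fin 2) ℂ, σ.PosSemidef → 0 ≤ ((Proj 1 Z * σ).trace).re ∧
    (((Proj 1 Z * σ).trace).re = 0 → σ = σ.trace • Proj 0 Z)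

lemma good_sx : Good sx := by
  refine ⟨by simp [Proj, sx, Matrix.trace_fin_two, Matrix.mul_apply, Fin.sum_univ_two]; norm_num,
    fun σ hσ => ?_⟩
  have key : (Proj 1 sx * σ).trace = 2⁻¹ * (star ![1, -1] ⬝ᵥ (σ *ᵥ ![1, -1])) := by
    simp [Proj, sx, Matrix.trace_fin_two, Matrix.mul_apply, Fin.sum_univ_two, dotProduct,
      Matrix.mulVec]
    ring
  have hn := hσ.dotProduct_mulVec_nonneg ![1, -1]
  obtain ⟨hr, hi⟩ := Complex.nonneg_iff.1 hn
  have e : ((Proj 1 sx * σ).trace).re = 2⁻¹ * (star ![1, -1] ⬝ᵥ (σ *ᵥ ![1, -1])).re := by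
    rw [key, Complex.mul_re, ← hi]; norm_num
  refine ⟨by rw [e]; positivity, fun h0 => ?_⟩
  have hz : star ![1, -1] ⬝ᵥ (σ *ᵥ ![1, -1]) = 0 :=
    Complex.ext (by rw [e] at h0; simpa using h0) hi.symm
  have hv := (hσ.dotProduct_mulVec_zero_iff _).1 hz
  have h1 := congrFun hv 0
  have h2 := congrFun hv 1
  have h3 := hσ.1.apply 0 1
  have h4 := hσ.1.apply 0 0
  simp [Matrix.mulVec, dotProduct, Fin.sum_univ_two] at h1 h2 h3 h4
  have a1 : σ 0 1 = σ 0 0 := by linear_combination -h1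
  have a2 : σ 1 0 = σ 0 0 := by
    rw [a1, ← h4] at h3
    simpa using congrArg (starRingEnd ℂ) h3
  have a3 : σ 1 1 = σ 0 0 := by linear_combination a2 - h2
  ext i j
  fin_cases i <;> fin_cases j <;> simp [Proj, sx, Matrix.trace_fin_two, a1, a2, a3] <;> ring

lemma good_sy : Good sy := by
  refine ⟨by simp [Proj, sy, Matrix.trace_fin_two, Matrix.mul_apply, Fin.sum_univ_two]
             ring_nf; simp; norm_num,
    fun σ hσ => ?_⟩
  have key : (Proj 1 sy * σ).trace = 2⁻¹ * (star ![1, -I] ⬝ᵥ (σ *ᵥ ![1, -I])) := by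
    simp [Proj, sy, Matrix.trace_fin_two, Matrix.mul_apply, Fin.sum_univ_two, dotProduct,
      Matrix.mulVec]
    linear_combination (2⁻¹ * σ 1 1) * I_mul_I
  have hn := hσ.dotProduct_mulVec_nonneg ![1, -I]
  obtain ⟨hr, hi⟩ := Complex.nonneg_iff.1 hn
  have e : ((Proj 1 sy * σ).trace).re = 2⁻¹ * (star ![1, -I] ⬝ᵥ (σ *ᵥ ![1, -I])).re := by
    rw [key, Complex.mul_re, ← hi]; norm_num
  refine ⟨by rw [e]; positivity, fun h0 => ?_⟩
  have hz : star ![1, -I] ⬝ᵥ (σ *ᵥ ![1, -I]) = 0 :=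
    Complex.ext (by rw [e] at h0; simpa using h0) hi.symm
  have hv := (hσ.dotProduct_mulVec_zero_iff _).1 hz
  have h1 := congrFun hv 0
  have h2 := congrFun hv 1
  have h3 := hσ.1.apply 0 1
  have h4 := hσ.1.apply 0 0
  simp [Matrix.mulVec, dotProduct, Fin.sum_univ_two] at h1 h2 h3 h4
  have a1 : σ 0 1 = -I * σ 0 0 := by linear_combination I * h1 + σ 0 1 * I_mul_I
  have a2 : σ 1 0 = I * σ 0 0 := by
    rw [a1, ← h4] at h3
    have := congrArg (starRingEnd ℂ) h3
    simp [h4] at this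
    exact this
  have a3 : σ 1 1 = σ 0 0 := by
    rw [a2] at h2
    linear_combination I * h2 + (σ 1 1 - σ 0 0) * I_mul_I
  ext i j
  fin_cases i <;> fin_cases j <;> simp [Proj, sy, Matrix.trace_fin_two, a1, a2, a3] <;> ring

lemma trace_split (Z σ : Matrix (Fin 2) (Fin 2) ℂ) :
    ((Proj 0 Z * σ).trace).re = (σ.trace).re - ((Proj 1 Z * σ).trace).re := by
  have : Proj 0 Z * σ = σ - Proj 1 Z * σ := by
    rw [eq_sub_iff_add_eq, ← add_mul]
    have : Proj 0 Z + Proj 1 Z = 1 := by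
      simp only [Proj, one_ne_zero, if_true, if_false]
      module
    rw [this, one_mul]
  rw [this, Matrix.trace_sub, Complex.sub_re]

lemma condProb_le {Z σ : Matrix (Fin 2) (Fin 2) ℂ} (hZ : Good Z) (hσ : σ.PosSemidef)
    (hp : 0 < (σ.trace).re) : condProb Z σ 0 ≤ 1 := by
  rw [condProb, div_le_one hp, trace_split]
  linarith [(hZ.2 σ hσ).1]

lemma condProb_one {Z σ : Matrix (Fin 2) (Fin 2) ℂ} (hZ : Good Z)
    (h : σ = σ.trace • Proj 0 Z) (hp : 0 < (σ.trace).re) : condProb Z σ 0 = 1 := by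
  have : (Proj 0 Z * σ).trace = σ.trace := by
    conv_lhs => rw [h]
    rw [Matrix.mul_smul, Matrix.trace_smul, hZ.1, smul_eq_mul, mul_one]
  rw [condProb, this, div_self hp.ne']

lemma component {m : ℕ} {q : Fin m → ℝ} (hq : ∀ i, 0 < q i)
    {σ : Fin m → Matrix (Fin 2) (Fin 2) ℂ} (hσ : ∀ i, (σ i).PosSemidef)
    {Z : Matrix (Fin 2) (Fin 2) ℂ} (hZ : Good Z)
    (hp : 0 < ((∑ i, (q i : ℂ) • σ i).trace).re)
    (h1 : condProb Z (∑ i, (q i : ℂ) • σ i) 0 = 1) (i : Fin m) :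
    σ i = (σ i).trace • Proj 0 Z := by
  rw [condProb, div_eq_one_iff_eq hp.ne', trace_split] at h1
  have h0 : ((Proj 1 Z * ∑ i, (q i : ℂ) • σ i).trace).re = 0 := by linarith
  have h2 : ∑ i, q i * ((Proj 1 Z * σ i).trace).re = 0 := by
    rw [← h0]
    simp only [Matrix.mul_sum, Matrix.mul_smul, Matrix.trace_sum, Matrix.trace_smul, Complex.re_sum,
      smul_eq_mul, Complex.re_ofReal_mul]
  have h3 := (Finset.sum_eq_zero_iff_of_nonneg
    (fun j _ => mul_nonneg (hq j).le (hZ.2 _ (hσ j)).1)).1 h2 i (Finset.mem_univ i)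
  exact (hZ.2 _ (hσ i)).2 ((mul_eq_zero.1 h3).resolve_left (hq i).ne')

/-- if a convex mixture `ρ = Σᵢ qᵢ ρᵢ` of three-qubit density matrices attains
`CP = 4`, then every component's conditional states are proportional to the corresponding Pauli
eigenprojectors; in particular every component with positive conditioning events also attains
`CP = 4` with the same settings. -/
theorem stmt17 (m : ℕ) (q : Fin m → ℝ)
    (ρi : Fin m → Matrix (Fin 2 × Fin 2 × Fin 2) (Fin 2 × Fin 2 × Fin 2) ℂ)
    (hq : ∀ i, 0 < q i) (hqs : (∑ i, q i) = 1)
    (hρi : ∀ i, (ρi i).PosSemidef ∧ (ρi i).trace = 1)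
    (X0 X1 Y0 Y1 : Matrix (Fin 2) (Fin 2) ℂ)
    (hX0 : Dichotomic X0) (hX1 : Dichotomic X1) (hY0 : Dichotomic Y0) (hY1 : Dichotomic Y1)
    (hpos : PosEvents (∑ i, (q i : ℂ) • ρi i) X0 X1 Y0 Y1)
    (hCP : CP (∑ i, (q i : ℂ) • ρi i) X0 X1 Y0 Y1 = 4) :
    ∀ i,
      (condState (ρi i) X0 Y0 1 1 = (condState (ρi i) X0 Y0 1 1).trace • Proj 0 sx ∧
       condState (ρi i) X1 Y1 0 1 = (condState (ρi i) X1 Y1 0 1).trace • Proj 0 sx ∧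
       condState (ρi i) X0 Y1 0 1 = (condState (ρi i) X0 Y1 0 1).trace • Proj 0 sy ∧
       condState (ρi i) X1 Y0 0 1 = (condState (ρi i) X1 Y0 0 1).trace • Proj 0 sy) ∧
      (PosEvents (ρi i) X0 X1 Y0 Y1 → CP (ρi i) X0 X1 Y0 Y1 = 4) := by
  have hps : (∑ i, (q i : ℂ) • ρi i).PosSemidef :=
    Matrix.posSemidef_sum _ fun i _ =>
      (hρi i).1.smul (Complex.zero_le_real.2 (hq i).le)
  obtain ⟨p1, p2, p3, p4⟩ := hpos
  have l1 := condProb_le good_sx (condState_psd hps hX0 hY0 1 1) p1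
  have l2 := condProb_le good_sx (condState_psd hps hX1 hY1 0 1) p2
  have l3 := condProb_le good_sy (condState_psd hps hX0 hY1 0 1) p3
  have l4 := condProb_le good_sy (condState_psd hps hX1 hY0 0 1) p4
  rw [CP] at hCP
  have e1 := le_antisymm l1 (by linarith)
  have e2 := le_antisymm l2 (by linarith)
  have e3 := le_antisymm l3 (by linarith)
  have e4 := le_antisymm l4 (by linarith)
  rw [condState_sum] at p1 p2 p3 p4 e1 e2 e3 e4
  intro i
  have c1 := component hq (fun i => condState_psd (hρi i).1 hX0 hY0 1 1) good_sx p1 e1 i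
  have c2 := component hq (fun i => condState_psd (hρi i).1 hX1 hY1 0 1) good_sx p2 e2 i
  have c3 := component hq (fun i => condState_psd (hρi i).1 hX0 hY1 0 1) good_sy p3 e3 i
  have c4 := component hq (fun i => condState_psd (hρi i).1 hX1 hY0 0 1) good_sy p4 e4 i
  refine ⟨⟨c1, c2, c3, c4⟩, ?_⟩
  rintro ⟨r1, r2, r3, r4⟩
  rw [CP, condProb_one good_sx c1 r1, condProb_one good_sx c2 r2, condProb_one good_sy c3 r3,
    condProb_one good_sy c4 r4]
  norm_num


end Paper
end
end

section
/- For V ∈ [0,1], let ρ_V = V·|GHZ⟩⟨GHZ| + (1−V)·I₈/8 be the noisy GHZ state, where |GHZ⟩ = (|000⟩ + |111⟩)/√2 and I₈ is the 8×8 identity matrix. With the observables X₀ = σx, X₁ = σy (Alice), Y₀ = σx, Y₁ = σy (Bob), and Z₀ = σx, Z₁ = σy (Charlie), the four conditioning events in CP have positive probability and CP(ρ_V) = 2 + 2V; in particular, CP(ρ_V) > 2 + √2 if and only if V > 1/√2. -/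
open Matrix Complex
open scoped Matrix Kronecker ComplexOrder

noncomputable section
namespace Paper

/-- The GHZ state `(|000⟩ + |111⟩)/√2`. -/
def ghz : Fin 2 × Fin 2 × Fin 2 → ℂ := fun i =>
  if i = (0, 0, 0) then (Real.sqrt 2 : ℂ)⁻¹ else if i = (1, 1, 1) then (Real.sqrt 2 : ℂ)⁻¹ else 0

/-- The noisy GHZ state `ρ_V = V·|GHZ⟩⟨GHZ| + (1−V)·I₈/8`. -/
def ghzV (V : ℝ) : Matrix (Fin 2 × Fin 2 × Fin 2) (Fin 2 × Fin 2 × Fin 2) ℂ :=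
  (V : ℂ) • outer ghz + (((1 - V) / 8 : ℝ) : ℂ) • 1

/-- Entries of the noisy GHZ state. -/
lemma ghzV_apply (V : ℝ) (i j : Fin 2 × Fin 2 × Fin 2) :
    ghzV V i j = (if (i = (0, 0, 0) ∨ i = (1, 1, 1)) ∧ (j = (0, 0, 0) ∨ j = (1, 1, 1))
      then (V : ℂ) / 2 else 0) + (if i = j then (1 - (V : ℂ)) / 8 else 0) := by
  have hs : ((Real.sqrt 2 : ℝ) : ℂ)⁻¹ * ((Real.sqrt 2 : ℝ) : ℂ)⁻¹ = 1 / 2 := by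
    rw [← mul_inv, ← Complex.ofReal_mul, Real.mul_self_sqrt (by norm_num)]
    norm_num
  have hg : ∀ k : Fin 2 × Fin 2 × Fin 2, ghz k =
      if k = (0, 0, 0) ∨ k = (1, 1, 1) then ((Real.sqrt 2 : ℝ) : ℂ)⁻¹ else 0 := by
    intro k
    unfold ghz
    split_ifs <;> simp_all
  have hd : (((1 - V) / 8 : ℝ) : ℂ) = (1 - (V : ℂ)) / 8 := by push_cast; rfl
  simp only [ghzV, outer, Matrix.add_apply, Matrix.smul_apply, Matrix.of_apply, hg, smul_eq_mul,
    Matrix.one_apply, hd, mul_ite, mul_one, mul_zero]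
  congr 1
  by_cases hi : i = (0, 0, 0) ∨ i = (1, 1, 1) <;> by_cases hj : j = (0, 0, 0) ∨ j = (1, 1, 1) <;>
    simp only [hi, hj, if_true, if_false, and_true, and_false, star_zero, mul_zero, zero_mul]
  have : star (((Real.sqrt 2 : ℝ) : ℂ)⁻¹) = ((Real.sqrt 2 : ℝ) : ℂ)⁻¹ := by
    simp
  rw [this, hs]
  ring

/-- Conditional states of Charlie for the noisy GHZ state. -/
lemma condState_ghzV (V : ℝ) (X Y : Matrix (Fin 2) (Fin 2) ℂ) (a b i j : Fin 2) :
    condState (ghzV V) X Y a b i j = (V : ℂ) / 2 * (Proj a X j i * Proj b Y j i) +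
      (if i = j then (1 - (V : ℂ)) / 8 * ((Proj a X).trace * (Proj b Y).trace) else 0) := by
  unfold condState
  generalize Proj a X = P
  generalize Proj b Y = Q
  simp only [trAB, Matrix.of_apply, Matrix.mul_apply, ghzV_apply, Fintype.sum_prod_type,
    Fin.sum_univ_two, Matrix.kroneckerMap_apply, Matrix.one_apply, Matrix.trace, Matrix.diag]
  fin_cases i <;> fin_cases j <;> simp <;> ring

/-- for the noisy GHZ state and settings `X₀ = Y₀ = Z₀ = σx`,
`X₁ = Y₁ = Z₁ = σy`, the conditioning events have positive probability, `CP = 2 + 2V`, and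
`CP > 2 + √2` if and only if `V > 1/√2`. -/
theorem stmt18 (V : ℝ) (h0 : 0 ≤ V) (h1 : V ≤ 1) :
    PosEvents (ghzV V) sx sy sx sy ∧
    CP (ghzV V) sx sy sx sy = 2 + 2 * V ∧
    (2 + Real.sqrt 2 < CP (ghzV V) sx sy sx sy ↔ 1 / Real.sqrt 2 < V) := by
  have e : PosEvents (ghzV V) sx sy sx sy ∧ CP (ghzV V) sx sy sx sy = 2 + 2 * V := by
    simp [PosEvents, CP, condProb, Matrix.trace_fin_two, Matrix.mul_apply, condState_ghzV, Proj,
      sx, sy, Fin.sum_univ_two, Matrix.one_apply]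
    ring_nf
    norm_num
    try ring
  refine ⟨e.1, e.2, ?_⟩
  rw [e.2, div_lt_iff₀ (by positivity)]
  have h2 : Real.sqrt 2 * Real.sqrt 2 = 2 := Real.mul_self_sqrt (by norm_num)
  have hp : 0 < Real.sqrt 2 := by positivity
  constructor <;> intro h <;> nlinarith

end Paper
end
end
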